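/- arXiv:2007.10664 — 3 statements merged into one kernel-verified Lean document; each statement's English description precedes it below -/
import Mathlib

section
/- The following are equivalent: (i) ‖T_ω − P_M‖ < 1 (operator norm in B(H)); (ii) the Friedrichs cosine satisfies c_ω < 1; (iii) the set A_ω = { ∑ᵢ ω i • xᵢ : xᵢ ∈ Mᵢ^⊥ for all i, ∑ᵢ ω i ‖xᵢ‖² < ∞ } is closed in H. -/
open RealInnerProductSpace

/-- The cosine of the Friedrichs angle between the product subspace `∏ᵢ Mᵢ` and the
diagonal in the `ω`-weighted `ℓ²` product space, expressed intrinsically in `H`. -/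
noncomputable def friedrichsCos {H : Type*} [NormedAddCommGroup H] [InnerProductSpace ℝ H]
    {ι : Type*} (ω : ι → ℝ) (M : ι → Submodule ℝ H) : ℝ :=
  sSup { r : ℝ | ∃ (x : ι → H) (y : H),
    (∀ i, x i ∈ M i ⊓ (⨅ j, M j)ᗮ) ∧
    (Summable fun i => ω i * ‖x i‖ ^ 2) ∧ (∑' i, ω i * ‖x i‖ ^ 2) ≤ 1 ∧
    y ∈ (⨅ j, M j)ᗮ ∧ ‖y‖ ≤ 1 ∧
    r = ∑' i, ω i * ⟪x i, y⟫ }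

/-!
Write `S y = (√ωᵢ P_{Mᵢ} y)ᵢ` and `S' y = (√ωᵢ P_{Mᵢᗮ} y)ᵢ`, both operators `H → ℓ²(ι, H)`, and
let `Q` be the projection onto `Mᗮ`. Then `T_ω = S† S`, and since `T_ω` fixes `M` pointwise,
`T_ω - P_M = (S Q)† (S Q)`. Cauchy–Schwarz in `ℓ²` gives `c_ω = ‖S Q‖`, so that
`‖T_ω - P_M‖ = c_ω²` by the C⋆-identity. As `‖S y‖² + ‖S' y‖² = ‖y‖²`, the bound `‖S Q‖ < 1` says
that `S'` is bounded below on `Mᗮ = (ker S')ᗮ`. By the closed range theorem this means that the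
range of `S'†`, which is `A_ω`, is closed.
-/

section BoundedBelow

variable {𝕜 E F G : Type*} [RCLike 𝕜] [NormedAddCommGroup E] [InnerProductSpace 𝕜 E]
  [NormedAddCommGroup F] [NormedSpace 𝕜 F] [NormedAddCommGroup G] [NormedSpace 𝕜 G]

theorem range_comp_subtypeL_ker_orthogonal [CompleteSpace E] (A : E →L[𝕜] F) :
    Set.range (A ∘L (A.ker)ᗮ.subtypeL) = Set.range A := by
  refine subset_antisymm (Set.range_comp_subset_range _ A) ?_
  rintro _ ⟨x, rfl⟩
  have hx : A (A.ker.starProjection x) = 0 := A.ker.starProjection_apply_mem x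
  exact ⟨⟨_, A.ker.sub_starProjection_mem_orthogonal x⟩, by simp [hx]⟩

theorem injective_comp_subtypeL_ker_orthogonal (A : E →L[𝕜] F) :
    Function.Injective (A ∘L (A.ker)ᗮ.subtypeL) := by
  refine (injective_iff_map_eq_zero _).2 fun x hx => Subtype.ext ?_
  exact A.ker.orthogonal_disjoint.le_bot ⟨hx, x.2⟩

theorem isClosed_range_iff_exists_mul_le_norm [CompleteSpace E] [CompleteSpace F]
    (A : E →L[𝕜] F) :
    IsClosed (Set.range A) ↔ ∃ c > 0, ∀ x ∈ A.kerᗮ, c * ‖x‖ ≤ ‖A x‖ := by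
  rw [← range_comp_subtypeL_ker_orthogonal,
    ContinuousLinearMap.isClosed_range_iff_antilipschitz_of_injective _
      (injective_comp_subtypeL_ker_orthogonal A),
    antilipschitzWith_iff_exists_mul_le_norm]
  simp

theorem norm_comp_starProjection_lt_one_iff {A : E →L[𝕜] F} {B : E →L[𝕜] G}
    (hAB : ∀ x, ‖A x‖ ^ 2 + ‖B x‖ ^ 2 = ‖x‖ ^ 2)
    (K : Submodule 𝕜 E) [K.HasOrthogonalProjection] :
    ‖A ∘L K.starProjection‖ < 1 ↔ ∃ c > 0, ∀ x ∈ K, c * ‖x‖ ≤ ‖B x‖ := by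
  constructor
  · intro h
    set a := ‖A ∘L K.starProjection‖
    have ha : 0 < 1 - a ^ 2 := sub_pos.2 ((sq_lt_one_iff₀ (norm_nonneg _)).2 h)
    refine ⟨√(1 - a ^ 2), Real.sqrt_pos.2 ha, fun x hx => ?_⟩
    have hAx : ‖A x‖ ≤ a * ‖x‖ := by
      simpa [Submodule.starProjection_eq_self_iff.2 hx] using
        (A ∘L K.starProjection).le_opNorm x
    refine le_of_sq_le_sq ?_ (norm_nonneg _)
    calc (√(1 - a ^ 2) * ‖x‖) ^ 2 = ‖x‖ ^ 2 - (a * ‖x‖) ^ 2 := by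
          rw [mul_pow, Real.sq_sqrt ha.le]; ring
      _ ≤ ‖x‖ ^ 2 - ‖A x‖ ^ 2 := by gcongr
      _ = ‖B x‖ ^ 2 := by rw [← hAB x]; ring
  · rintro ⟨c, hc, hbound⟩
    have hsqrt : √(1 - c ^ 2) < 1 := by
      rw [Real.sqrt_lt' one_pos]
      nlinarith
    refine (ContinuousLinearMap.opNorm_le_bound _ (Real.sqrt_nonneg _) fun x => ?_).trans_lt hsqrt
    set y := K.starProjection x
    have hBy : (c * ‖y‖) ^ 2 ≤ ‖B y‖ ^ 2 := by
      gcongr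
      exact hbound y (K.starProjection_apply_mem x)
    calc ‖A y‖ ≤ √((1 - c ^ 2) * ‖y‖ ^ 2) :=
          Real.le_sqrt_of_sq_le (by linarith [hAB y])
      _ = √(1 - c ^ 2) * ‖y‖ := by
          rw [Real.sqrt_mul' _ (sq_nonneg _), Real.sqrt_sq (norm_nonneg _)]
      _ ≤ √(1 - c ^ 2) * ‖x‖ := by gcongr; exact K.norm_starProjection_apply_le x

end BoundedBelow

section Adjoint

variable {𝕜 E F : Type*} [RCLike 𝕜] [NormedAddCommGroup E] [InnerProductSpace 𝕜 E]
  [NormedAddCommGroup F] [InnerProductSpace 𝕜 F]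

theorem isClosed_range_adjoint [CompleteSpace E] [CompleteSpace F] {A : E →L[𝕜] F}
    (hA : IsClosed (Set.range A)) : IsClosed (Set.range A.adjoint) := by
  obtain ⟨c, hc, hbound⟩ := (isClosed_range_iff_exists_mul_le_norm A).1 hA
  refine (isClosed_range_iff_exists_mul_le_norm _).2 ⟨c, hc, fun y hy => ?_⟩
  have hy : y ∈ Set.range A := by
    rw [ContinuousLinearMap.orthogonal_ker, ContinuousLinearMap.adjoint_adjoint,
      IsClosed.submodule_topologicalClosure_eq hA] at hy
    exact hy
  rw [← range_comp_subtypeL_ker_orthogonal] at hy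
  obtain ⟨⟨x, hx⟩, rfl⟩ := hy
  change c * ‖A x‖ ≤ ‖A.adjoint (A x)‖
  rcases (norm_nonneg (A x)).eq_or_lt with hzero | hpos
  · simp [← hzero]
  refine le_of_mul_le_mul_right ?_ hpos
  calc c * ‖A x‖ * ‖A x‖ = c * RCLike.re (inner 𝕜 (A.adjoint (A x)) x) := by
        rw [ContinuousLinearMap.adjoint_inner_left, inner_self_eq_norm_mul_norm, mul_assoc]
    _ ≤ c * (‖A.adjoint (A x)‖ * ‖x‖) := by gcongr; exact re_inner_le_norm _ _
    _ = ‖A.adjoint (A x)‖ * (c * ‖x‖) := by ring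
    _ ≤ ‖A.adjoint (A x)‖ * ‖A x‖ := by gcongr; exact hbound x hx

theorem isClosed_range_adjoint_iff [CompleteSpace E] [CompleteSpace F] (A : E →L[𝕜] F) :
    IsClosed (Set.range A.adjoint) ↔ IsClosed (Set.range A) :=
  ⟨fun h => by simpa using isClosed_range_adjoint h, isClosed_range_adjoint⟩

theorem norm_comp_starProjection_ker_orthogonal_lt_one_iff [CompleteSpace E] [CompleteSpace F]
    {G : Type*} [NormedAddCommGroup G] [NormedSpace 𝕜 G] {A : E →L[𝕜] G} {B : E →L[𝕜] F}
    (hAB : ∀ x, ‖A x‖ ^ 2 + ‖B x‖ ^ 2 = ‖x‖ ^ 2)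
    {K : Submodule 𝕜 E} [K.HasOrthogonalProjection] (hK : B.ker = K) :
    ‖A ∘L Kᗮ.starProjection‖ < 1 ↔ IsClosed (Set.range B.adjoint) := by
  rw [norm_comp_starProjection_lt_one_iff hAB, isClosed_range_adjoint_iff,
    isClosed_range_iff_exists_mul_le_norm, hK]

theorem starProjection_mem_orthogonal_of_le {U V : Submodule 𝕜 E} [V.HasOrthogonalProjection]
    (hUV : U ≤ V) {y : E} (hy : y ∈ Uᗮ) : V.starProjection y ∈ Uᗮ := by
  simpa using
    Uᗮ.sub_mem hy (Submodule.orthogonal_le hUV (V.sub_starProjection_mem_orthogonal y))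

theorem norm_adjoint_comp_self_sub_starProjection [CompleteSpace E] [CompleteSpace F]
    (A : E →L[𝕜] F) (K : Submodule 𝕜 E) [K.HasOrthogonalProjection]
    (hK : ∀ x ∈ K, A.adjoint (A x) = x) :
    ‖A.adjoint ∘L A - K.starProjection‖ = ‖A ∘L Kᗮ.starProjection‖ ^ 2 := by
  set T := A.adjoint ∘L A
  have hTK : T ∘L K.starProjection = K.starProjection :=
    ContinuousLinearMap.ext fun x => hK _ (K.starProjection_apply_mem x)
  have hKT : K.starProjection ∘L T = K.starProjection := by
    simpa [T, ContinuousLinearMap.adjoint_comp, (isSelfAdjoint_starProjection K).adjoint_eq]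
      using congrArg ContinuousLinearMap.adjoint hTK
  have hKK : K.starProjection ∘L K.starProjection = K.starProjection :=
    K.isIdempotentElem_starProjection
  have hcompress : Kᗮ.starProjection ∘L T ∘L Kᗮ.starProjection = T - K.starProjection := by
    rw [K.starProjection_orthogonal, ContinuousLinearMap.comp_sub, ContinuousLinearMap.sub_comp,
      ContinuousLinearMap.comp_id, ContinuousLinearMap.id_comp, ContinuousLinearMap.comp_sub, hTK,
      hKT, hKK]
    abel
  rw [sq, ← ContinuousLinearMap.norm_adjoint_comp_self, ContinuousLinearMap.adjoint_comp,
    (isSelfAdjoint_starProjection _).adjoint_eq, ← hcompress]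
  rfl

end Adjoint

section Column

variable {𝕜 E ι : Type*} {F : ι → Type*} [RCLike 𝕜] [NormedAddCommGroup E] [NormedSpace 𝕜 E]
  [∀ i, NormedAddCommGroup (F i)] [∀ i, NormedSpace 𝕜 (F i)]

theorem norm_apply_sq_le_norm_sq_mul_norm_sq {G : Type*} [SeminormedAddCommGroup G]
    [NormedSpace 𝕜 G] (A : E →L[𝕜] G) (x : E) : ‖A x‖ ^ 2 ≤ ‖A‖ ^ 2 * ‖x‖ ^ 2 := by
  rw [← mul_pow]
  gcongr
  exact A.le_opNorm x

theorem memℓp_two_iff_summable_norm_sq {x : ∀ i, F i} :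
    Memℓp x 2 ↔ Summable fun i => ‖x i‖ ^ 2 := by
  simpa using memℓp_gen_iff (p := 2) (by simp) (f := x)

theorem hasSum_norm_sq_lp_two (x : lp F 2) : HasSum (fun i => ‖x i‖ ^ 2) (‖x‖ ^ 2) := by
  simpa using lp.hasSum_norm (p := 2) (by simp) x

theorem summable_norm_sq_apply {B : ∀ i, E →L[𝕜] F i} (hB : Summable fun i => ‖B i‖ ^ 2)
    (x : E) : Summable fun i => ‖B i x‖ ^ 2 :=
  (hB.mul_right (‖x‖ ^ 2)).of_nonneg_of_le (fun _ => sq_nonneg _) fun i =>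
    norm_apply_sq_le_norm_sq_mul_norm_sq (B i) x

/-- The column operator `x ↦ (B i x)ᵢ` of a square-summable family of bounded operators, with
values in the Hilbert sum of the targets. -/
noncomputable def columnOp (B : ∀ i, E →L[𝕜] F i) (hB : Summable fun i => ‖B i‖ ^ 2) :
    E →L[𝕜] lp F 2 :=
  LinearMap.mkContinuous
    { toFun := fun x =>
        ⟨fun i => B i x, memℓp_two_iff_summable_norm_sq.2 (summable_norm_sq_apply hB x)⟩
      map_add' := fun x y => lp.ext <| funext fun i => map_add (B i) x y
      map_smul' := fun c x => lp.ext <| funext fun i => map_smul (B i) c x }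
    √(∑' i, ‖B i‖ ^ 2) fun x => by
      rw [← Real.sqrt_sq (norm_nonneg x), ← Real.sqrt_mul' _ (sq_nonneg _)]
      refine Real.le_sqrt_of_sq_le ?_
      refine hasSum_le (fun i => ?_) (hasSum_norm_sq_lp_two _) (hB.hasSum.mul_right (‖x‖ ^ 2))
      exact norm_apply_sq_le_norm_sq_mul_norm_sq (B i) x

@[simp]
theorem columnOp_apply (B : ∀ i, E →L[𝕜] F i) (hB : Summable fun i => ‖B i‖ ^ 2) (x : E) (i : ι) :
    columnOp B hB x i = B i x :=
  rfl

theorem hasSum_adjoint_columnOp {𝕜 E ι : Type*} {F : ι → Type*} [RCLike 𝕜]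
    [NormedAddCommGroup E] [InnerProductSpace 𝕜 E] [CompleteSpace E]
    [∀ i, NormedAddCommGroup (F i)] [∀ i, InnerProductSpace 𝕜 (F i)] [∀ i, CompleteSpace (F i)]
    (B : ∀ i, E →L[𝕜] F i) (hB : Summable fun i => ‖B i‖ ^ 2) (x : lp F 2) :
    HasSum (fun i => (B i).adjoint (x i)) ((columnOp B hB).adjoint x) := by
  classical
  have hsingle (i : ι) : (columnOp B hB).adjoint (lp.single 2 i (x i)) = (B i).adjoint (x i) :=
    ext_inner_right 𝕜 fun y => by
      simp [ContinuousLinearMap.adjoint_inner_left, lp.inner_single_left]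
  simpa only [hsingle] using
    (lp.hasSum_single ENNReal.ofNat_ne_top x).mapL (columnOp B hB).adjoint

end Column

section WeightedProjections

theorem norm_sqrt_smul_sq {E : Type*} [SeminormedAddCommGroup E] [NormedSpace ℝ E] {a : ℝ}
    (ha : 0 ≤ a) (x : E) : ‖√a • x‖ ^ 2 = a * ‖x‖ ^ 2 := by
  rw [norm_smul, mul_pow, Real.norm_of_nonneg (Real.sqrt_nonneg a), Real.sq_sqrt ha]

variable {H ι : Type*} [NormedAddCommGroup H] [InnerProductSpace ℝ H] {ω : ι → ℝ}

theorem summable_norm_sq_sqrt_smul_starProjection (hs : Summable ω) (K : ι → Submodule ℝ H)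
    [∀ i, (K i).HasOrthogonalProjection] :
    Summable fun i => ‖√(ω i) • (K i).starProjection‖ ^ 2 := by
  refine hs.abs.of_nonneg_of_le (fun i => sq_nonneg _) fun i => ?_
  rw [norm_smul, mul_pow, Real.norm_of_nonneg (Real.sqrt_nonneg _), Real.sq_sqrt']
  calc max (ω i) 0 * ‖(K i).starProjection‖ ^ 2 ≤ |ω i| * 1 ^ 2 := by
        gcongr
        · exact max_le (le_abs_self _) (abs_nonneg _)
        · exact (K i).starProjection_norm_le
    _ = |ω i| := by ring

/-- The operator `y ↦ (√ωᵢ P_{Kᵢ} y)ᵢ` into the Hilbert sum `ℓ²(ι, H)`. The factor `√ωᵢ` moves the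
`ω`-weight of the product space into the operator, so that the unweighted `ℓ²` space can be used. -/
noncomputable def weightedProjections (hs : Summable ω) (K : ι → Submodule ℝ H)
    [∀ i, (K i).HasOrthogonalProjection] : H →L[ℝ] lp (fun _ : ι => H) 2 :=
  columnOp (fun i => √(ω i) • (K i).starProjection)
    (summable_norm_sq_sqrt_smul_starProjection hs K)

theorem weightedProjections_apply (hs : Summable ω) (K : ι → Submodule ℝ H)
    [∀ i, (K i).HasOrthogonalProjection] (y : H) (i : ι) :
    weightedProjections hs K y i = √(ω i) • (K i).starProjection y :=
  rfl

theorem hasSum_norm_sq_weightedProjections (hω : ∀ i, 0 ≤ ω i) (hs : Summable ω)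
    (K : ι → Submodule ℝ H) [∀ i, (K i).HasOrthogonalProjection] (y : H) :
    HasSum (fun i => ω i * ‖(K i).starProjection y‖ ^ 2) (‖weightedProjections hs K y‖ ^ 2) := by
  simpa only [weightedProjections_apply, norm_sqrt_smul_sq (hω _)] using
    hasSum_norm_sq_lp_two (weightedProjections hs K y)

theorem norm_sq_weightedProjections_add_orthogonal (hω : ∀ i, 0 ≤ ω i) (hs : HasSum ω 1)
    (K : ι → Submodule ℝ H) [∀ i, (K i).HasOrthogonalProjection] (y : H) :
    ‖weightedProjections hs.summable K y‖ ^ 2 +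
      ‖weightedProjections hs.summable (fun i => (K i)ᗮ) y‖ ^ 2 = ‖y‖ ^ 2 := by
  have hsum := (hasSum_norm_sq_weightedProjections hω hs.summable K y).add
    (hasSum_norm_sq_weightedProjections hω hs.summable (fun i => (K i)ᗮ) y)
  simp only [← mul_add, ← Submodule.norm_sq_eq_add_norm_sq_starProjection] at hsum
  simpa using hsum.unique (hs.mul_right (‖y‖ ^ 2))

theorem ker_weightedProjections_orthogonal (hω : ∀ i, 0 < ω i) (hs : Summable ω)
    (K : ι → Submodule ℝ H) [∀ i, (K i).HasOrthogonalProjection] :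
    (weightedProjections hs fun i => (K i)ᗮ).ker = ⨅ i, K i := by
  ext y
  have hcoord (i : ι) : √(ω i) • (K i)ᗮ.starProjection y = 0 ↔ y ∈ K i := by
    rw [smul_eq_zero_iff_right (Real.sqrt_pos.2 (hω i)).ne',
      Submodule.starProjection_apply_eq_zero_iff, Submodule.orthogonal_orthogonal]
  simp only [LinearMap.mem_ker, ContinuousLinearMap.coe_coe, lp.ext_iff, funext_iff,
    weightedProjections_apply, lp.coeFn_zero, Pi.zero_apply, hcoord, Submodule.mem_iInf]

theorem tsum_mul_inner_le_norm_weightedProjections (hω : ∀ i, 0 ≤ ω i) (hs : Summable ω)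
    {K : ι → Submodule ℝ H} [∀ i, (K i).HasOrthogonalProjection] {x : ι → H}
    (hx : ∀ i, x i ∈ K i) (hxs : Summable fun i => ω i * ‖x i‖ ^ 2)
    (hx1 : ∑' i, ω i * ‖x i‖ ^ 2 ≤ 1) (y : H) :
    ∑' i, ω i * ⟪x i, y⟫ ≤ ‖weightedProjections hs K y‖ := by
  simp only [← norm_sqrt_smul_sq (hω _)] at hxs hx1
  let z : lp (fun _ : ι => H) 2 := ⟨fun i => √(ω i) • x i, memℓp_two_iff_summable_norm_sq.2 hxs⟩
  have hz : ‖z‖ ≤ 1 := by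
    rw [← sq_le_one_iff₀ (norm_nonneg z), ← (hasSum_norm_sq_lp_two z).tsum_eq]
    exact hx1
  have hcoord (i : ι) : ⟪z i, weightedProjections hs K y i⟫ = ω i * ⟪x i, y⟫ := by
    rw [weightedProjections_apply, inner_smul_left, inner_smul_right,
      ← Submodule.inner_starProjection_left_eq_right, Submodule.starProjection_eq_self_iff.2 (hx i),
      conj_trivial, ← mul_assoc, Real.mul_self_sqrt (hω i)]
  calc ∑' i, ω i * ⟪x i, y⟫ = ⟪z, weightedProjections hs K y⟫ := by
        simp only [lp.inner_eq_tsum, hcoord]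
    _ ≤ ‖z‖ * ‖weightedProjections hs K y‖ := real_inner_le_norm _ _
    _ ≤ ‖weightedProjections hs K y‖ := mul_le_of_le_one_left (norm_nonneg _) hz

theorem exists_tsum_mul_inner_eq_norm_weightedProjections (hω : ∀ i, 0 ≤ ω i) (hs : Summable ω)
    {U : Submodule ℝ H} {K : ι → Submodule ℝ H} [∀ i, (K i).HasOrthogonalProjection]
    (hUK : ∀ i, U ≤ K i) {y : H} (hy : y ∈ Uᗮ) :
    ∃ x : ι → H, (∀ i, x i ∈ K i ⊓ Uᗮ) ∧ (Summable fun i => ω i * ‖x i‖ ^ 2) ∧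
      ∑' i, ω i * ‖x i‖ ^ 2 ≤ 1 ∧ ‖weightedProjections hs K y‖ = ∑' i, ω i * ⟪x i, y⟫ := by
  set n := ‖weightedProjections hs K y‖
  have hnorm := hasSum_norm_sq_weightedProjections hω hs K y
  have hnormalized : HasSum (fun i => ω i * ‖n⁻¹ • (K i).starProjection y‖ ^ 2)
      (n⁻¹ ^ 2 * n ^ 2) := by
    simpa only [norm_smul, mul_pow, Real.norm_eq_abs, sq_abs, mul_left_comm] using
      hnorm.mul_left (n⁻¹ ^ 2)
  have hinner : HasSum (fun i => ω i * ⟪n⁻¹ • (K i).starProjection y, y⟫) (n⁻¹ * n ^ 2) := by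
    have hproj (i : ι) : ⟪(K i).starProjection y, y⟫ = ‖(K i).starProjection y‖ ^ 2 :=
      (K i).re_inner_starProjection_eq_normSq y
    simpa only [real_inner_smul_left, hproj, mul_left_comm] using hnorm.mul_left n⁻¹
  refine ⟨fun i => n⁻¹ • (K i).starProjection y,
    fun i => Submodule.smul_mem _ _ ⟨(K i).starProjection_apply_mem y,
      starProjection_mem_orthogonal_of_le (hUK i) hy⟩, hnormalized.summable, ?_, ?_⟩
  · rw [hnormalized.tsum_eq, ← mul_pow]
    exact pow_le_one₀ (by positivity) inv_mul_le_one
  · rw [hinner.tsum_eq, sq, ← mul_assoc, mul_comm n⁻¹, mul_inv_mul_cancel]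

theorem friedrichsCos_eq_norm (hω : ∀ i, 0 ≤ ω i) (hs : Summable ω) (M : ι → Submodule ℝ H)
    [∀ i, (M i).HasOrthogonalProjection] [(⨅ i, M i).HasOrthogonalProjection] :
    friedrichsCos ω M = ‖weightedProjections hs M ∘L (⨅ i, M i)ᗮ.starProjection‖ := by
  set S := weightedProjections hs M
  set Q := (⨅ i, M i)ᗮ.starProjection
  refine IsLUB.csSup_eq ⟨?_, fun b hb => ?_⟩ ⟨0, 0, 0, by simp⟩
  · rintro _ ⟨x, y, hx, hxs, hx1, hy, hy1, rfl⟩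
    calc ∑' i, ω i * ⟪x i, y⟫ ≤ ‖S y‖ :=
          tsum_mul_inner_le_norm_weightedProjections hω hs (fun i => (hx i).1) hxs hx1 y
      _ = ‖(S ∘L Q) y‖ := by simp [Q, Submodule.starProjection_eq_self_iff.2 hy]
      _ ≤ ‖S ∘L Q‖ := (S ∘L Q).unit_le_opNorm y hy1
  · refine ContinuousLinearMap.opNorm_le_of_unit_norm (hb ⟨0, 0, by simp⟩) fun z hz => hb ?_
    have hy : Q z ∈ (⨅ i, M i)ᗮ := Submodule.starProjection_apply_mem _ z
    obtain ⟨x, hx, hxs, hx1, hxy⟩ :=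
      exists_tsum_mul_inner_eq_norm_weightedProjections hω hs (iInf_le M) hy
    exact ⟨x, Q z, hx, hxs, hx1, hy, (Submodule.norm_starProjection_apply_le _ z).trans hz.le, hxy⟩

theorem friedrichsCos_nonneg (hω : ∀ i, 0 ≤ ω i) (hs : Summable ω) (M : ι → Submodule ℝ H)
    [∀ i, (M i).HasOrthogonalProjection] [(⨅ i, M i).HasOrthogonalProjection] :
    0 ≤ friedrichsCos ω M := by
  rw [friedrichsCos_eq_norm hω hs M]
  exact ContinuousLinearMap.opNorm_nonneg _

variable [CompleteSpace H]

theorem hasSum_adjoint_weightedProjections (hs : Summable ω) (K : ι → Submodule ℝ H)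
    [∀ i, (K i).HasOrthogonalProjection] (z : lp (fun _ : ι => H) 2) :
    HasSum (fun i => √(ω i) • (K i).starProjection (z i))
      ((weightedProjections hs K).adjoint z) := by
  simpa [weightedProjections, (isSelfAdjoint_starProjection (K _)).adjoint_eq] using
    hasSum_adjoint_columnOp _ (summable_norm_sq_sqrt_smul_starProjection hs K) z

theorem hasSum_adjoint_weightedProjections_apply_self (hω : ∀ i, 0 ≤ ω i) (hs : Summable ω)
    (K : ι → Submodule ℝ H) [∀ i, (K i).HasOrthogonalProjection] (y : H) :
    HasSum (fun i => ω i • (K i).starProjection y)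
      ((weightedProjections hs K).adjoint (weightedProjections hs K y)) := by
  have hcoord (i : ι) : √(ω i) • (K i).starProjection (weightedProjections hs K y i) =
      ω i • (K i).starProjection y := by
    rw [weightedProjections_apply, map_smul, smul_smul, Real.mul_self_sqrt (hω i),
      Submodule.starProjection_eq_self_iff.2 ((K i).starProjection_apply_mem y)]
  simpa only [hcoord] using hasSum_adjoint_weightedProjections hs K (weightedProjections hs K y)

theorem range_adjoint_weightedProjections (hω : ∀ i, 0 ≤ ω i) (hs : Summable ω)
    (K : ι → Submodule ℝ H) [∀ i, (K i).HasOrthogonalProjection] :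
    Set.range (weightedProjections hs K).adjoint =
      {y | ∃ x : ι → H, (∀ i, x i ∈ K i) ∧ (Summable fun i => ω i * ‖x i‖ ^ 2) ∧
        y = ∑' i, ω i • x i} := by
  ext y
  constructor
  · rintro ⟨z, rfl⟩
    refine ⟨fun i => (√(ω i))⁻¹ • (K i).starProjection (z i),
      fun i => (K i).smul_mem _ ((K i).starProjection_apply_mem _), ?_, ?_⟩
    · refine (hasSum_norm_sq_lp_two z).summable.of_nonneg_of_le
        (fun i => mul_nonneg (hω i) (sq_nonneg _)) fun i => ?_
      calc ω i * ‖(√(ω i))⁻¹ • (K i).starProjection (z i)‖ ^ 2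
          = ((√(ω i))⁻¹ * √(ω i)) ^ 2 * ‖(K i).starProjection (z i)‖ ^ 2 := by
            rw [norm_smul, Real.norm_of_nonneg (by positivity), mul_pow, mul_pow,
              Real.sq_sqrt (hω i)]
            ring
        _ ≤ 1 ^ 2 * ‖z i‖ ^ 2 := by
            gcongr
            · exact inv_mul_le_one
            · exact (K i).norm_starProjection_apply_le (z i)
        _ = ‖z i‖ ^ 2 := by ring
    · rw [← (hasSum_adjoint_weightedProjections hs K z).tsum_eq]
      simp only [smul_smul, ← div_eq_mul_inv, Real.div_sqrt]
  · rintro ⟨x, hx, hxs, rfl⟩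
    simp only [← norm_sqrt_smul_sq (hω _)] at hxs
    let z : lp (fun _ : ι => H) 2 := ⟨fun i => √(ω i) • x i, memℓp_two_iff_summable_norm_sq.2 hxs⟩
    refine ⟨z, ?_⟩
    have hcoord (i : ι) : √(ω i) • (K i).starProjection (z i) = ω i • x i := by
      rw [map_smul, Submodule.starProjection_eq_self_iff.2 (hx i), smul_smul,
        Real.mul_self_sqrt (hω i)]
    simpa only [hcoord] using (hasSum_adjoint_weightedProjections hs K z).tsum_eq.symm

theorem norm_sub_starProjection_eq_friedrichsCos_sq (hω : ∀ i, 0 ≤ ω i) (hs : HasSum ω 1)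
    (M : ι → Submodule ℝ H) [∀ i, (M i).HasOrthogonalProjection]
    [(⨅ i, M i).HasOrthogonalProjection] {T : H →L[ℝ] H}
    (hT : ∀ z, T z = ∑' i, ω i • (M i).starProjection z) :
    ‖T - (⨅ i, M i).starProjection‖ = friedrichsCos ω M ^ 2 := by
  set S := weightedProjections hs.summable M
  have hTS : T = S.adjoint ∘L S := by
    ext z
    rw [hT, (hasSum_adjoint_weightedProjections_apply_self hω hs.summable M z).tsum_eq]
    rfl
  have hfix : ∀ z ∈ ⨅ i, M i, S.adjoint (S z) = z := by
    intro z hz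
    have hproj (i : ι) : (M i).starProjection z = z :=
      Submodule.starProjection_eq_self_iff.2 (Submodule.mem_iInf M |>.1 hz i)
    have hsum := hasSum_adjoint_weightedProjections_apply_self hω hs.summable M z
    simp only [hproj] at hsum
    simpa using hsum.unique (hs.smul_const z)
  rw [hTS, norm_adjoint_comp_self_sub_starProjection S _ hfix,
    friedrichsCos_eq_norm hω hs.summable M]

theorem friedrichsCos_lt_one_iff_isClosed (hω : ∀ i, 0 < ω i) (hs : HasSum ω 1)
    (M : ι → Submodule ℝ H) [∀ i, (M i).HasOrthogonalProjection]
    [(⨅ i, M i).HasOrthogonalProjection] :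
    friedrichsCos ω M < 1 ↔ IsClosed {y : H | ∃ x : ι → H, (∀ i, x i ∈ (M i)ᗮ) ∧
      (Summable fun i => ω i * ‖x i‖ ^ 2) ∧ y = ∑' i, ω i • x i} := by
  have hω₀ (i : ι) : 0 ≤ ω i := (hω i).le
  rw [friedrichsCos_eq_norm hω₀ hs.summable,
    norm_comp_starProjection_ker_orthogonal_lt_one_iff
      (norm_sq_weightedProjections_add_orthogonal hω₀ hs M)
      (ker_weightedProjections_orthogonal hω hs.summable M),
    range_adjoint_weightedProjections hω₀]

end WeightedProjections

/-- For the simultaneous projection operator `T_ω` (as a bounded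
operator) and `P_M`, the following are equivalent: (i) `‖T_ω − P_M‖ < 1`;
(ii) `c_ω < 1`; (iii) `A_ω` is closed in `H`. -/
theorem stmt_14 {H : Type*} [NormedAddCommGroup H] [InnerProductSpace ℝ H] [CompleteSpace H]
    {ι : Type*} [Countable ι] [Nonempty ι]
    (ω : ι → ℝ) (hω : ∀ i, 0 < ω i) (hωsum : HasSum ω 1)
    (M : ι → Submodule ℝ H) [∀ i, CompleteSpace (M i)]
    [CompleteSpace ↥(⨅ i, M i : Submodule ℝ H)]
    (hMnt : ∀ i, M i ≠ ⊥)
    (T : H →L[ℝ] H)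
    (hT : ∀ z : H, T z = ∑' i, ω i • ((Submodule.orthogonalProjectionOnto (M i) z : H)))
    (P : H →L[ℝ] H)
    (hP : P = (⨅ i, M i : Submodule ℝ H).subtypeL.comp
      (Submodule.orthogonalProjectionOnto (⨅ i, M i : Submodule ℝ H))) :
    (‖T - P‖ < 1 ↔ friedrichsCos ω M < 1) ∧
    (friedrichsCos ω M < 1 ↔
      IsClosed { y : H | ∃ x : ι → H, (∀ i, x i ∈ (M i)ᗮ) ∧
        (Summable fun i => ω i * ‖x i‖ ^ 2) ∧ y = ∑' i, ω i • x i }) := by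
  have hω₀ (i : ι) : 0 ≤ ω i := (hω i).le
  have hP' : P = (⨅ i, M i).starProjection := hP
  refine ⟨?_, friedrichsCos_lt_one_iff_isClosed hω hωsum M⟩
  rw [hP', norm_sub_starProjection_eq_friedrichsCos_sq hω₀ hωsum M hT,
    sq_lt_one_iff₀ (friedrichsCos_nonneg hω₀ hωsum.summable M)]
end

section
/- If the set A_ω = { ∑ᵢ ω i • xᵢ : xᵢ ∈ Mᵢ^⊥ for all i, ∑ᵢ ω i ‖xᵢ‖² < ∞ } is closed in H, then c_ω < 1 and the simultaneous projection method converges linearly: for every x ∈ H and every integer k ≥ 1, ‖T_ω^k x − P_M x‖ ≤ c_ω^{2k} · ‖x‖. -/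
open RealInnerProductSpace

/-!
Write `ω i = v i ^ 2` with `v` a unit vector of `ℓ²`, and let `D_K y = (v i • P_{K i} y)ᵢ` be the
weighted analysis operator of a family `K`. Let `P` be the projection onto `⨅ i, M i` and
`Q = 1 - P`. Then `T_ω = D_M† D_M`, the set `A_ω` is the range of `D_{M^⊥}†`, and the Friedrichs
cosine `c_ω` is the operator norm `‖D_M Q‖`. Since `T_ω` is self-adjoint and fixes `⨅ i, M i`
pointwise, `T_ω ^ k - P = (T_ω - P) ^ k = ((D_M Q)† (D_M Q)) ^ k` for `k ≥ 1`, whose norm is at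
most `c_ω ^ (2 * k)`. By Pythagoras `‖D_M y‖² + ‖D_{M^⊥} y‖² = ‖y‖²`. If `D_{M^⊥}†` has closed
range, then `D_{M^⊥}` is bounded below on `(ker D_{M^⊥})ᗮ = (⨅ i, M i)ᗮ`, and this makes
`‖D_M Q‖ < 1`.
-/

section Operators

open scoped InnerProduct

theorem sub_pow_of_mul_eq {R : Type*} [Ring R] {a p : R} (hp : IsIdempotentElem p)
    (hap : a * p = p) (hpa : p * a = p) {k : ℕ} (hk : 1 ≤ k) : (a - p) ^ k = a ^ k - p := by
  induction k, hk using Nat.le_induction with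
  | base => simp only [pow_one]
  | succ k _ ih =>
    have hpow : ∀ n, a ^ n * p = p := fun n => by
      induction n with
      | zero => rw [pow_zero, one_mul]
      | succ n ihn => rw [pow_succ, mul_assoc, hap, ihn]
    rw [pow_succ, ih, sub_mul, mul_sub, mul_sub, hpow k, hpa, hp.eq, sub_self, sub_zero, ← pow_succ]

variable {𝕜 E F G : Type*} [RCLike 𝕜]
  [NormedAddCommGroup E] [InnerProductSpace 𝕜 E]

theorem exists_norm_le_mul_norm_of_isClosed_range_adjoint
    [NormedAddCommGroup F] [InnerProductSpace 𝕜 F] [CompleteSpace E] [CompleteSpace F]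
    (T : E →L[𝕜] F) (hT : IsClosed ((T†).range : Set E)) :
    ∃ C, ∀ x ∈ T.kerᗮ, ‖x‖ ≤ C * ‖T x‖ := by
  have : CompleteSpace ↥(T†).range := hT.completeSpace_coe
  obtain ⟨C, -, hC⟩ := (T†).rangeRestrict.exists_preimage_norm_le
    (LinearMap.surjective_rangeRestrict _)
  refine ⟨C, fun x hx => ?_⟩
  have hx_range : x ∈ (T†).range := by
    rwa [T.orthogonal_ker, hT.submodule_topologicalClosure_eq] at hx
  obtain ⟨u, hu, hu_norm⟩ := hC ⟨x, hx_range⟩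
  have hux : (T†) u = x := congrArg Subtype.val hu
  have hsq : ‖x‖ * ‖x‖ ≤ C * ‖T x‖ * ‖x‖ :=
    calc ‖x‖ * ‖x‖ = RCLike.re (inner 𝕜 x ((T†) u)) := by
          rw [hux, inner_self_eq_norm_mul_norm]
      _ = RCLike.re (inner 𝕜 (T x) u) := by rw [T.adjoint_inner_right]
      _ ≤ ‖T x‖ * ‖u‖ := re_inner_le_norm _ _
      _ ≤ ‖T x‖ * (C * ‖x‖) := by gcongr; exact hu_norm
      _ = C * ‖T x‖ * ‖x‖ := by ring
  rcases (norm_nonneg x).eq_or_lt with hx0 | hx0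
  · rw [norm_eq_zero.1 hx0.symm, map_zero, norm_zero, norm_zero, mul_zero]
  · exact le_of_mul_le_mul_right hsq hx0

theorem starProjection_mem_orthogonal_of_le_s15 {K L : Submodule 𝕜 E} [L.HasOrthogonalProjection]
    (hKL : K ≤ L) {x : E} (hx : x ∈ Kᗮ) : L.starProjection x ∈ Kᗮ := by
  intro u hu
  rw [← Submodule.inner_starProjection_left_eq_right,
    Submodule.starProjection_eq_self_iff.2 (hKL hu)]
  exact hx u hu

theorem norm_comp_starProjection_lt_one [SeminormedAddCommGroup F] [NormedSpace 𝕜 F]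
    [SeminormedAddCommGroup G] [NormedSpace 𝕜 G] {A : E →L[𝕜] F} {B : E →L[𝕜] G}
    (hAB : ∀ x, ‖A x‖ ^ 2 + ‖B x‖ ^ 2 ≤ ‖x‖ ^ 2) (K : Submodule 𝕜 E) [K.HasOrthogonalProjection]
    {C : ℝ} (hB : ∀ x ∈ K, ‖x‖ ≤ C * ‖B x‖) : ‖A ∘L K.starProjection‖ < 1 := by
  have hpos : 0 < 1 + C ^ 2 := by positivity
  have hlt : √(C ^ 2 / (1 + C ^ 2)) < 1 := by
    rw [Real.sqrt_lt' one_pos, one_pow, div_lt_one hpos]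
    linarith
  refine (ContinuousLinearMap.opNorm_le_bound _ (Real.sqrt_nonneg _) fun x => ?_).trans_lt hlt
  set z := K.starProjection x
  have hBz : ‖z‖ ^ 2 ≤ C ^ 2 * ‖B z‖ ^ 2 := by
    rw [← mul_pow]
    exact pow_le_pow_left₀ (norm_nonneg z) (hB z (K.starProjection_apply_mem x)) 2
  have hAz : ‖A z‖ ^ 2 ≤ C ^ 2 / (1 + C ^ 2) * ‖z‖ ^ 2 := by
    rw [div_mul_eq_mul_div, le_div_iff₀ hpos]
    nlinarith [hAB z, sq_nonneg C, sq_nonneg ‖B z‖]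
  calc ‖A z‖ ≤ √(C ^ 2 / (1 + C ^ 2) * ‖z‖ ^ 2) := Real.le_sqrt_of_sq_le hAz
    _ = √(C ^ 2 / (1 + C ^ 2)) * ‖z‖ := by
      rw [Real.sqrt_mul' _ (sq_nonneg _), Real.sqrt_sq (norm_nonneg z)]
    _ ≤ √(C ^ 2 / (1 + C ^ 2)) * ‖x‖ := by gcongr; exact K.norm_starProjection_apply_le x

end Operators

section FusionFrame

open scoped InnerProduct ComplexConjugate

variable {𝕜 H ι : Type*} [RCLike 𝕜] [NormedAddCommGroup H] [InnerProductSpace 𝕜 H]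

theorem hasSum_norm_sq_lp {G : ι → Type*} [∀ i, NormedAddCommGroup (G i)] (u : lp G 2) :
    HasSum (fun i => ‖u i‖ ^ 2) (‖u‖ ^ 2) := by
  simpa using lp.hasSum_norm (p := 2) (by norm_num) u

theorem exists_lp_coe_eq_smul {K : ι → Submodule 𝕜 H} {v : ι → 𝕜} {x : ι → H}
    (hxK : ∀ i, x i ∈ K i) (hx : Summable fun i => ‖v i‖ ^ 2 * ‖x i‖ ^ 2) :
    ∃ u : lp (fun i => K i) 2, ∀ i, (u i : H) = v i • x i := by
  refine ⟨⟨fun i => ⟨v i • x i, (K i).smul_mem _ (hxK i)⟩, memℓp_gen ?_⟩, fun i => rfl⟩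
  simpa [norm_smul, mul_pow] using hx

section Analysis

variable (v : lp (fun _ : ι => 𝕜) 2) (K : ι → Submodule 𝕜 H) [∀ i, (K i).HasOrthogonalProjection]

theorem norm_smul_orthogonalProjectionOnto_le (a : 𝕜) (L : Submodule 𝕜 H)
    [L.HasOrthogonalProjection] (y : H) : ‖a • L.orthogonalProjectionOnto y‖ ≤ ‖‖y‖ • a‖ := by
  rw [norm_smul, norm_smul, norm_norm, mul_comm]
  gcongr
  exact L.norm_orthogonalProjectionOnto_apply_le y

theorem memℓp_smul_orthogonalProjectionOnto (y : H) :
    Memℓp (fun i => v i • (K i).orthogonalProjectionOnto y) 2 :=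
  (lp.memℓp (‖y‖ • v)).mono' fun i => norm_smul_orthogonalProjectionOnto_le (v i) (K i) y

/-- The analysis operator `y ↦ (v i • P_{K i} y)ᵢ` of the weighted family of subspaces
`(K i, v i)`, in the sense of fusion frames. Its adjoint is the synthesis operator
`u ↦ ∑ᵢ conj (v i) • u i`. Square-summability of the weights makes it bounded into the
Hilbert sum of the `K i`. -/
noncomputable def fusionAnalysis : H →L[𝕜] lp (fun i => K i) 2 :=
  LinearMap.mkContinuous
    { toFun := fun y => ⟨_, memℓp_smul_orthogonalProjectionOnto v K y⟩
      map_add' := fun y z => Subtype.ext <| funext fun i => by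
        simp only [map_add, smul_add, lp.coeFn_add, Pi.add_apply]
      map_smul' := fun a y => Subtype.ext <| funext fun i => by
        simp only [map_smul, smul_comm a, lp.coeFn_smul, Pi.smul_apply, RingHom.id_apply] }
    ‖v‖ fun y => by
      rw [mul_comm, ← norm_norm y, ← norm_smul]
      exact lp.norm_mono two_ne_zero fun i =>
        norm_smul_orthogonalProjectionOnto_le (v i) (K i) y

theorem coe_fusionAnalysis_apply (y : H) (i : ι) :
    (fusionAnalysis v K y i : H) = v i • (K i).starProjection y :=
  rfl

theorem hasSum_norm_sq_fusionAnalysis (y : H) :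
    HasSum (fun i => ‖v i‖ ^ 2 * ‖(K i).starProjection y‖ ^ 2) (‖fusionAnalysis v K y‖ ^ 2) := by
  simpa only [Submodule.coe_norm, coe_fusionAnalysis_apply, norm_smul, mul_pow]
    using hasSum_norm_sq_lp (fusionAnalysis v K y)

theorem norm_sq_fusionAnalysis_add_norm_sq_orthogonal (y : H) :
    ‖fusionAnalysis v K y‖ ^ 2 + ‖fusionAnalysis v (fun i => (K i)ᗮ) y‖ ^ 2 =
      ‖v‖ ^ 2 * ‖y‖ ^ 2 := by
  refine ((hasSum_norm_sq_fusionAnalysis v K y).add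
    (hasSum_norm_sq_fusionAnalysis v (fun i => (K i)ᗮ) y)).unique ?_
  simpa only [← mul_add, ← Submodule.norm_sq_eq_add_norm_sq_starProjection]
    using (hasSum_norm_sq_lp v).mul_right (‖y‖ ^ 2)

variable {v}

theorem ker_fusionAnalysis (hv : ∀ i, v i ≠ 0) : (fusionAnalysis v K).ker = ⨅ i, (K i)ᗮ := by
  ext y
  simp only [LinearMap.mem_ker, ContinuousLinearMap.coe_coe, Submodule.mem_iInf,
    ← Submodule.starProjection_apply_eq_zero_iff]
  refine ⟨fun hy i => ?_, fun hy => ?_⟩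
  · have hi := coe_fusionAnalysis_apply v K y i
    rw [hy] at hi
    exact (smul_eq_zero.1 hi.symm).resolve_left (hv i)
  · ext i
    rw [coe_fusionAnalysis_apply, hy, smul_zero]
    rfl

end Analysis

variable (v : lp (fun _ : ι => 𝕜) 2) (K : ι → Submodule 𝕜 H) [CompleteSpace H]
  [∀ i, CompleteSpace (K i)]

theorem hasSum_adjoint_fusionAnalysis (u : lp (fun i => K i) 2) :
    HasSum (fun i => conj (v i) • (u i : H)) (((fusionAnalysis v K)†) u) := by
  classical
  have hsingle (i : ι) (a : K i) :
      ((fusionAnalysis v K)†) (lp.single 2 i a) = conj (v i) • (a : H) := by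
    refine ext_inner_right 𝕜 fun y => ?_
    rw [ContinuousLinearMap.adjoint_inner_left, lp.inner_single_left, Submodule.coe_inner,
      coe_fusionAnalysis_apply, inner_smul_right, inner_smul_left, RCLike.conj_conj,
      ← Submodule.inner_starProjection_left_eq_right,
      Submodule.starProjection_eq_self_iff.2 a.2]
  simpa only [hsingle] using (lp.hasSum_single (by norm_num) u).mapL ((fusionAnalysis v K)†)

variable {v}

theorem mem_range_adjoint_fusionAnalysis (hv : ∀ i, v i ≠ 0) {y : H} :
    y ∈ ((fusionAnalysis v K)†).range ↔ ∃ x : ι → H, (∀ i, x i ∈ K i) ∧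
      (Summable fun i => ‖v i‖ ^ 2 * ‖x i‖ ^ 2) ∧ y = ∑' i, (‖v i‖ ^ 2 : 𝕜) • x i := by
  constructor
  · rintro ⟨u, rfl⟩
    rw [ContinuousLinearMap.coe_coe]
    have hu (i : ι) : v i • (v i)⁻¹ • (u i : H) = u i := smul_inv_smul₀ (hv i) _
    refine ⟨fun i => (v i)⁻¹ • u i, fun i => (K i).smul_mem _ (u i).2, ?_, ?_⟩
    · simpa only [← mul_pow, ← norm_smul, hu] using! (hasSum_norm_sq_lp u).summable
    · simpa only [← RCLike.conj_mul, mul_smul, hu]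
        using (hasSum_adjoint_fusionAnalysis v K u).tsum_eq.symm
  · rintro ⟨x, hxK, hx, rfl⟩
    obtain ⟨u, hu⟩ := exists_lp_coe_eq_smul hxK hx
    refine ⟨u, ?_⟩
    rw [ContinuousLinearMap.coe_coe]
    simpa only [hu, smul_smul, RCLike.conj_mul]
      using (hasSum_adjoint_fusionAnalysis v K u).tsum_eq.symm

theorem norm_fusionAnalysis_comp_starProjection_lt_one [(⨅ i, K i).HasOrthogonalProjection]
    (hv : ∀ i, v i ≠ 0) (hv_norm : ‖v‖ ≤ 1)
    (hclosed : IsClosed (((fusionAnalysis v fun i => (K i)ᗮ)†).range : Set H)) :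
    ‖fusionAnalysis v K ∘L (⨅ i, K i)ᗮ.starProjection‖ < 1 := by
  obtain ⟨C, hC⟩ := exists_norm_le_mul_norm_of_isClosed_range_adjoint _ hclosed
  simp only [ker_fusionAnalysis _ hv, Submodule.orthogonal_orthogonal] at hC
  refine norm_comp_starProjection_lt_one (fun y => ?_) _ hC
  rw [norm_sq_fusionAnalysis_add_norm_sq_orthogonal]
  exact mul_le_of_le_one_left (sq_nonneg _) (pow_le_one₀ (norm_nonneg v) hv_norm)

variable (v)

/-- The fusion frame operator `y ↦ ∑ᵢ ‖v i‖² • P_{K i} y`. -/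
noncomputable def fusionFrameOperator : H →L[𝕜] H :=
  (fusionAnalysis v K)† ∘L fusionAnalysis v K

theorem hasSum_fusionFrameOperator (y : H) :
    HasSum (fun i => (‖v i‖ ^ 2 : 𝕜) • (K i).starProjection y) (fusionFrameOperator v K y) := by
  simpa only [fusionFrameOperator, ContinuousLinearMap.comp_apply, coe_fusionAnalysis_apply,
    smul_smul, RCLike.conj_mul] using hasSum_adjoint_fusionAnalysis v K (fusionAnalysis v K y)

theorem fusionFrameOperator_apply_of_mem_iInf {y : H} (hy : y ∈ ⨅ i, K i) :
    fusionFrameOperator v K y = (‖v‖ ^ 2 : 𝕜) • y := by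
  have hK (i : ι) : (K i).starProjection y = y :=
    Submodule.starProjection_eq_self_iff.2 ((Submodule.mem_iInf _).1 hy i)
  have hv : HasSum (fun i => (‖v i‖ ^ 2 : 𝕜)) (‖v‖ ^ 2 : 𝕜) := by
    exact_mod_cast (RCLike.hasSum_ofReal 𝕜).2 (hasSum_norm_sq_lp v)
  refine (hasSum_fusionFrameOperator v K y).unique ?_
  simpa only [hK] using hv.smul_const y

variable {v} [(⨅ i, K i).HasOrthogonalProjection]

theorem fusionFrameOperator_mul_starProjection (hv : ‖v‖ = 1) :
    fusionFrameOperator v K * (⨅ i, K i).starProjection = (⨅ i, K i).starProjection := by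
  ext y
  rw [mul_apply_eq_comp, fusionFrameOperator_apply_of_mem_iInf v K
    (Submodule.starProjection_apply_mem _ y), hv, RCLike.ofReal_one, one_pow, one_smul]

theorem starProjection_mul_fusionFrameOperator (hv : ‖v‖ = 1) :
    (⨅ i, K i).starProjection * fusionFrameOperator v K = (⨅ i, K i).starProjection := by
  have hself : IsSelfAdjoint (fusionFrameOperator v K) :=
    (ContinuousLinearMap.isPositive_adjoint_comp_self _).isSelfAdjoint
  simpa only [star_mul, hself.star_eq, (isSelfAdjoint_starProjection _).star_eq]
    using congrArg star (fusionFrameOperator_mul_starProjection K hv)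

theorem fusionFrameOperator_sub_starProjection (hv : ‖v‖ = 1) :
    fusionFrameOperator v K - (⨅ i, K i).starProjection =
      (fusionAnalysis v K ∘L (⨅ i, K i)ᗮ.starProjection)† ∘L
        (fusionAnalysis v K ∘L (⨅ i, K i)ᗮ.starProjection) := by
  set P := (⨅ i, K i).starProjection
  have hQ : (⨅ i, K i)ᗮ.starProjection = 1 - P := Submodule.starProjection_orthogonal' _
  calc fusionFrameOperator v K - P = (1 - P) * fusionFrameOperator v K * (1 - P) := by
        rw [sub_mul, one_mul, starProjection_mul_fusionFrameOperator K hv, mul_sub, mul_one,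
          sub_mul, fusionFrameOperator_mul_starProjection K hv,
          (⨅ i, K i).isIdempotentElem_starProjection.eq, sub_self, sub_zero]
    _ = _ := by
        rw [← hQ, ContinuousLinearMap.adjoint_comp,
          (isSelfAdjoint_starProjection (⨅ i, K i)ᗮ).adjoint_eq]
        rfl

theorem norm_fusionFrameOperator_pow_sub_starProjection_le (hv : ‖v‖ = 1) {k : ℕ} (hk : 1 ≤ k) :
    ‖fusionFrameOperator v K ^ k - (⨅ i, K i).starProjection‖ ≤
      ‖fusionAnalysis v K ∘L (⨅ i, K i)ᗮ.starProjection‖ ^ (2 * k) := by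
  rw [← sub_pow_of_mul_eq (Submodule.isIdempotentElem_starProjection _)
    (fusionFrameOperator_mul_starProjection K hv) (starProjection_mul_fusionFrameOperator K hv) hk,
    fusionFrameOperator_sub_starProjection K hv, pow_mul, sq,
    ← ContinuousLinearMap.norm_adjoint_comp_self]
  exact norm_pow_le' _ hk

end FusionFrame

section SimultaneousProjection

variable {H ι : Type*} [NormedAddCommGroup H] [InnerProductSpace ℝ H]

theorem exists_lp_sq_eq {ω : ι → ℝ} {s : ℝ} (hω : ∀ i, 0 ≤ ω i) (hωsum : HasSum ω s) :
    ∃ v : lp (fun _ : ι => ℝ) 2, ‖v‖ ^ 2 = s ∧ ω = fun i => v i ^ 2 := by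
  have hsq (i : ι) : √(ω i) ^ 2 = ω i := Real.sq_sqrt (hω i)
  let v : lp (fun _ : ι => ℝ) 2 :=
    ⟨fun i => √(ω i), memℓp_gen (by simpa [hsq] using hωsum.summable)⟩
  exact ⟨v, (hasSum_norm_sq_lp v).unique (by simpa [v, hsq] using hωsum),
    funext fun i => (hsq i).symm⟩

variable (v : lp (fun _ : ι => ℝ) 2) (M : ι → Submodule ℝ H) [∀ i, (M i).HasOrthogonalProjection]

theorem hasSum_mul_inner_eq_inner_fusionAnalysis {u : lp (fun i => M i) 2} {x : ι → H}
    (hx : ∀ i, x i ∈ M i) (hu : ∀ i, (u i : H) = v i • x i) (y : H) :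
    HasSum (fun i => v i ^ 2 * ⟪x i, y⟫) ⟪u, fusionAnalysis v M y⟫ := by
  refine (lp.hasSum_inner u (fusionAnalysis v M y)).congr_fun fun i => ?_
  rw [Submodule.coe_inner, coe_fusionAnalysis_apply, hu, real_inner_smul_left,
    real_inner_smul_right, ← Submodule.inner_starProjection_left_eq_right,
    Submodule.starProjection_eq_self_iff.2 (hx i), sq, mul_assoc]

variable {v M}

theorem tsum_mul_inner_le_norm_fusionAnalysis {x : ι → H} (hxM : ∀ i, x i ∈ M i)
    (hx : Summable fun i => v i ^ 2 * ‖x i‖ ^ 2) (hx_le : ∑' i, v i ^ 2 * ‖x i‖ ^ 2 ≤ 1) (y : H) :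
    ∑' i, v i ^ 2 * ⟪x i, y⟫ ≤ ‖fusionAnalysis v M y‖ := by
  obtain ⟨u, hu⟩ := exists_lp_coe_eq_smul (v := v) hxM (by simpa using hx)
  have hu_norm : ‖u‖ ≤ 1 := by
    rw [← sq_le_one_iff₀ (norm_nonneg u), ← (hasSum_norm_sq_lp u).tsum_eq]
    simpa only [Submodule.coe_norm, hu, norm_smul, mul_pow, Real.norm_eq_abs, sq_abs] using hx_le
  calc ∑' i, v i ^ 2 * ⟪x i, y⟫ = ⟪u, fusionAnalysis v M y⟫ :=
        (hasSum_mul_inner_eq_inner_fusionAnalysis v M hxM hu y).tsum_eq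
    _ ≤ ‖u‖ * ‖fusionAnalysis v M y‖ := real_inner_le_norm _ _
    _ ≤ ‖fusionAnalysis v M y‖ := mul_le_of_le_one_left (norm_nonneg _) hu_norm

variable (v M)

theorem hasSum_mul_inner_starProjection (y : H) :
    HasSum (fun i => v i ^ 2 * ⟪(M i).starProjection y, y⟫) (‖fusionAnalysis v M y‖ ^ 2) := by
  rw [← real_inner_self_eq_norm_sq]
  exact hasSum_mul_inner_eq_inner_fusionAnalysis v M
    (fun i => (M i).starProjection_apply_mem y) (coe_fusionAnalysis_apply v M y) y

theorem exists_norm_fusionAnalysis_eq_tsum_mul_inner {L : Submodule ℝ H} (hL : ∀ i, L ≤ M i)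
    {z : H} (hz : z ∈ Lᗮ) :
    ∃ x : ι → H, (∀ i, x i ∈ M i ⊓ Lᗮ) ∧ (Summable fun i => v i ^ 2 * ‖x i‖ ^ 2) ∧
      (∑' i, v i ^ 2 * ‖x i‖ ^ 2) ≤ 1 ∧
      ‖fusionAnalysis v M z‖ = ∑' i, v i ^ 2 * ⟪x i, z⟫ := by
  set r := ‖fusionAnalysis v M z‖
  have hx_sum : HasSum (fun i => v i ^ 2 * ‖r⁻¹ • (M i).starProjection z‖ ^ 2)
      (r⁻¹ ^ 2 * r ^ 2) := by
    refine ((hasSum_norm_sq_fusionAnalysis v M z).mul_left (r⁻¹ ^ 2)).congr_fun fun i => ?_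
    rw [norm_smul, mul_pow, Real.norm_eq_abs, Real.norm_eq_abs, sq_abs, sq_abs, mul_left_comm]
  have hxz_sum : HasSum (fun i => v i ^ 2 * ⟪r⁻¹ • (M i).starProjection z, z⟫)
      (r⁻¹ * r ^ 2) := by
    refine ((hasSum_mul_inner_starProjection v M z).mul_left r⁻¹).congr_fun fun i => ?_
    rw [real_inner_smul_left, mul_left_comm]
  refine ⟨_, fun i => Submodule.smul_mem _ _ ⟨(M i).starProjection_apply_mem z,
    starProjection_mem_orthogonal_of_le_s15 (hL i) hz⟩, hx_sum.summable, ?_, ?_⟩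
  · rw [hx_sum.tsum_eq, ← mul_pow]
    exact pow_le_one₀ (by positivity) inv_mul_le_one
  · rw [hxz_sum.tsum_eq, sq, ← mul_assoc, inv_mul_mul_self]

theorem friedrichsCos_eq_norm_s15 [(⨅ i, M i).HasOrthogonalProjection] :
    friedrichsCos (fun i => v i ^ 2) M =
      ‖fusionAnalysis v M ∘L (⨅ i, M i)ᗮ.starProjection‖ := by
  set Q := (⨅ i, M i)ᗮ.starProjection
  set A := fusionAnalysis v M ∘L Q
  have attained (y : H) (hy : ‖y‖ ≤ 1) : ∃ (x : ι → H) (z : H),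
      (∀ i, x i ∈ M i ⊓ (⨅ j, M j)ᗮ) ∧ (Summable fun i => v i ^ 2 * ‖x i‖ ^ 2) ∧
      (∑' i, v i ^ 2 * ‖x i‖ ^ 2) ≤ 1 ∧ z ∈ (⨅ j, M j)ᗮ ∧ ‖z‖ ≤ 1 ∧
      ‖A y‖ = ∑' i, v i ^ 2 * ⟪x i, z⟫ := by
    have hQy : Q y ∈ (⨅ i, M i)ᗮ := Submodule.starProjection_apply_mem _ y
    obtain ⟨x, hxM, hx, hx_le, hAy⟩ :=
      exists_norm_fusionAnalysis_eq_tsum_mul_inner v M (fun i => iInf_le M i) hQy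
    exact ⟨x, Q y, hxM, hx, hx_le, hQy, (Submodule.norm_starProjection_apply_le _ y).trans hy, hAy⟩
  refine IsLUB.csSup_eq ⟨?_, fun b hb => ?_⟩ ⟨_, attained 0 (by rw [norm_zero]; exact zero_le_one)⟩
  · rintro _ ⟨x, y, hxM, hx, hx_le, hy, hy_norm, rfl⟩
    have hAy : A y = fusionAnalysis v M y :=
      congrArg (fusionAnalysis v M) (Submodule.starProjection_eq_self_iff.2 hy)
    calc ∑' i, v i ^ 2 * ⟪x i, y⟫ ≤ ‖fusionAnalysis v M y‖ :=
          tsum_mul_inner_le_norm_fusionAnalysis (fun i => (hxM i).1) hx hx_le y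
      _ = ‖A y‖ := by rw [hAy]
      _ ≤ ‖A‖ := A.unit_le_opNorm y hy_norm
  · have hb_nonneg : 0 ≤ b :=
      (norm_nonneg (A 0)).trans (hb (attained 0 (by rw [norm_zero]; exact zero_le_one)))
    exact A.opNorm_le_of_unit_norm hb_nonneg fun y hy => hb (attained y hy.le)

end SimultaneousProjection

/-- If `A_ω` is closed in `H`, then `c_ω < 1` and the simultaneous
projection method converges linearly: `‖T_ω^k x − P_M x‖ ≤ c_ω^{2k} ‖x‖`. -/
theorem stmt_15 {H : Type*} [NormedAddCommGroup H] [InnerProductSpace ℝ H] [CompleteSpace H]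
    {ι : Type*} [Countable ι] [Nonempty ι]
    (ω : ι → ℝ) (hω : ∀ i, 0 < ω i) (hωsum : HasSum ω 1)
    (M : ι → Submodule ℝ H) [∀ i, CompleteSpace (M i)]
    [CompleteSpace ↥(⨅ i, M i : Submodule ℝ H)]
    (hMnt : ∀ i, M i ≠ ⊥)
    (hclosed : IsClosed { y : H | ∃ x : ι → H, (∀ i, x i ∈ (M i)ᗮ) ∧
      (Summable fun i => ω i * ‖x i‖ ^ 2) ∧ y = ∑' i, ω i • x i }) :
    friedrichsCos ω M < 1 ∧
    ∀ (x : H) (k : ℕ), 1 ≤ k →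
      ‖(fun z : H => ∑' i, ω i • ((Submodule.orthogonalProjectionOnto (M i) z : H)))^[k] x -
          (Submodule.orthogonalProjectionOnto (⨅ i, M i : Submodule ℝ H) x : H)‖ ≤
        friedrichsCos ω M ^ (2 * k) * ‖x‖ := by
  obtain ⟨v, hv_sq, rfl⟩ := exists_lp_sq_eq (fun i => (hω i).le) hωsum
  have hv (i : ι) : v i ≠ 0 := (pow_ne_zero_iff two_ne_zero).1 (hω i).ne'
  have hv_norm : ‖v‖ = 1 := (pow_eq_one_iff_of_nonneg (norm_nonneg v) two_ne_zero).1 hv_sq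
  have hrange : IsClosed (((fusionAnalysis v fun i => (M i)ᗮ).adjoint).range : Set H) := by
    convert hclosed using 1
    ext y
    simpa using mem_range_adjoint_fusionAnalysis (fun i => (M i)ᗮ) hv
  have hT : (fun z : H => ∑' i, v i ^ 2 • ((M i).orthogonalProjectionOnto z : H)) =
      fusionFrameOperator v M :=
    funext fun z => by simpa using (hasSum_fusionFrameOperator v M z).tsum_eq
  rw [friedrichsCos_eq_norm_s15, hT]
  refine ⟨norm_fusionAnalysis_comp_starProjection_lt_one M hv hv_norm.le hrange, fun x k hk => ?_⟩
  have hx := (fusionFrameOperator v M ^ k - (⨅ i, M i).starProjection).le_of_opNorm_le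
    (norm_fusionFrameOperator_pow_sub_starProjection_le M hv_norm hk) x
  rwa [sub_apply, FunLike.coe_pow_eq_iterate] at hx
end

section
/- Assume the set A_ω = { ∑ᵢ ω i • xᵢ : xᵢ ∈ Mᵢ^⊥ for all i, ∑ᵢ ω i ‖xᵢ‖² < ∞ } is not closed in H. Then the simultaneous projection method converges arbitrarily slowly: for every sequence (a_k)_{k≥1} of real numbers with a_k ≥ 0 for all k and a_k → 0 as k → ∞, there exists x ∈ H such that ‖T_ω^k x − P_M x‖ ≥ a_k for every integer k ≥ 1. -/
open RealInnerProductSpace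

/-!
Let `T` be a symmetric nonexpansive operator. If `range (1 - T)` is not closed, then
`(ker (1 - T))ᗮ` contains unit vectors `e` moved arbitrarily little by `T`. Since
`‖T ^ k y‖² = ⟪y, T ^ (2 k) y⟫`, adding a small multiple of such an `e` of the right sign to a
vector `x` keeps `‖T ^ k x‖` large for all `k` up to any prescribed bound. Perturbing infinitely
often, with summable sizes and rapidly growing bounds, yields a vector whose orbit decays as slowly
as desired. For simultaneous projections, `ker (1 - T)` is the intersection `M` of the subspaces and
`range (1 - T) ⊆ A_ω ⊆ Mᗮ`, where `range (1 - T)` is dense in `Mᗮ`; so if `range (1 - T)` were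
closed, then `A_ω = Mᗮ` would be closed too.
-/

open Filter Topology
open scoped InnerProductSpace

theorem dist_iterate_le_mul_dist_of_lipschitzWith_one {α : Type*} [PseudoMetricSpace α] {f : α → α}
    (hf : LipschitzWith 1 f) (x : α) (n : ℕ) : dist x (f^[n] x) ≤ n * dist x (f x) := by
  have hstep (k : ℕ) : dist (f^[k] x) (f^[k + 1] x) ≤ dist x (f x) := by
    simpa using hf.dist_iterate_succ_le_geometric x k
  simpa using dist_le_range_sum_of_dist_le n fun {k} _ => hstep k

theorem exists_strictMono_forall_exists_le {a c : ℕ → ℝ} (ha : Tendsto a atTop (𝓝 0))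
    (hc : ∀ j, 0 < c j) (ha0 : ∀ k, a k ≤ c 0) :
    ∃ n : ℕ → ℕ, StrictMono n ∧ ∀ k, ∃ j, k ≤ n j ∧ a k ≤ c j := by
  obtain ⟨n, hn, han⟩ := extraction_forall_of_eventually fun j =>
    eventually_forall_ge_atTop.2 (ha.eventually_le_const (hc (j + 1)))
  refine ⟨n, hn, fun k => ?_⟩
  classical
  have hex : ∃ j, k ≤ n j := ⟨k, hn.id_le k⟩
  refine ⟨Nat.find hex, Nat.find_spec hex, ?_⟩
  cases hj : Nat.find hex with
  | zero => exact ha0 k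
  | succ j => exact han j k (not_le.1 (Nat.find_min hex (by lia))).le

section SlowOrbits

variable {𝕜 E : Type*} [RCLike 𝕜] [NormedAddCommGroup E] [InnerProductSpace 𝕜 E]

theorem norm_sq_add_norm_sq_sub_le_norm_map_add_sq {S : E →ₗ[𝕜] E} (hS : S.IsSymmetric)
    {x f : E} (hxf : 0 ≤ RCLike.re ⟪x, f⟫_𝕜) :
    ‖S x‖ ^ 2 + ‖f‖ ^ 2 - (2 * ‖x‖ + ‖f‖) * ‖S (S f) - f‖ ≤ ‖S (x + f)‖ ^ 2 := by
  have inner_map_map (y : E) : RCLike.re ⟪S y, S f⟫_𝕜 =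
      RCLike.re ⟪y, f⟫_𝕜 + RCLike.re ⟪y, S (S f) - f⟫_𝕜 := by
    rw [hS, ← map_add, ← inner_add_right, add_sub_cancel]
  have neg_le_inner (y : E) : -(‖y‖ * ‖S (S f) - f‖) ≤ RCLike.re ⟪y, S (S f) - f⟫_𝕜 :=
    neg_le_of_abs_le ((RCLike.abs_re_le_norm _).trans (norm_inner_le_norm _ _))
  have norm_sq_map : ‖S f‖ ^ 2 = ‖f‖ ^ 2 + RCLike.re ⟪f, S (S f) - f⟫_𝕜 := by
    rw [← inner_self_eq_norm_sq (𝕜 := 𝕜), inner_map_map, inner_self_eq_norm_sq]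
  rw [map_add, norm_add_sq (𝕜 := 𝕜), inner_map_map, norm_sq_map]
  linarith [neg_le_inner x, neg_le_inner f]

/-- `T` has unit vectors in `N` that it moves by an arbitrarily small amount: `1` is an approximate
eigenvalue of `T`, with approximate eigenvectors in `N`. -/
def HasAlmostFixedVectors (T : E →ₗ[𝕜] E) (N : Submodule 𝕜 E) : Prop :=
  ∀ ε > 0, ∃ e ∈ N, ‖e‖ = 1 ∧ ‖T e - e‖ ≤ ε

namespace HasAlmostFixedVectors

variable {T : E →ₗ[𝕜] E} {N : Submodule 𝕜 E}

theorem exists_norm_eq_re_inner_nonneg (h : HasAlmostFixedVectors T N) (x : E) {c ε : ℝ}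
    (hc : 0 < c) (hε : 0 < ε) :
    ∃ f ∈ N, ‖f‖ = c ∧ 0 ≤ RCLike.re ⟪x, f⟫_𝕜 ∧ ‖T f - f‖ ≤ ε := by
  obtain ⟨e, heN, he, hTe⟩ := h (ε / c) (by positivity)
  have hnorm : ‖(c : 𝕜) • e‖ = c := by simp [norm_smul, he, abs_of_pos hc]
  have hmoved : ‖T ((c : 𝕜) • e) - (c : 𝕜) • e‖ ≤ ε := by
    rw [map_smul, ← smul_sub, norm_smul, RCLike.norm_of_nonneg hc.le]
    exact (le_div_iff₀' hc).1 hTe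
  rcases le_total 0 (RCLike.re ⟪x, (c : 𝕜) • e⟫_𝕜) with hpos | hneg
  · exact ⟨(c : 𝕜) • e, N.smul_mem _ heN, hnorm, hpos, hmoved⟩
  · refine ⟨-((c : 𝕜) • e), N.neg_mem (N.smul_mem _ heN), by rwa [norm_neg], ?_, ?_⟩
    · rwa [inner_neg_right, map_neg, Left.nonneg_neg_iff]
    · rwa [map_neg, ← neg_sub', norm_neg]

theorem exists_norm_eq_forall_iterate (h : HasAlmostFixedVectors T N) (hlip : LipschitzWith 1 T)
    (x : E) {c ε : ℝ} (hc : 0 < c) (hε : 0 < ε) (n : ℕ) :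
    ∃ f ∈ N, ‖f‖ = c ∧ 0 ≤ RCLike.re ⟪x, f⟫_𝕜 ∧ ∀ k ≤ n, ‖T^[k] f - f‖ ≤ ε := by
  obtain ⟨f, hfN, hf, hxf, hTf⟩ :=
    h.exists_norm_eq_re_inner_nonneg x hc (ε := ε / (n + 1)) (by positivity)
  refine ⟨f, hfN, hf, hxf, fun k hk => ?_⟩
  calc ‖T^[k] f - f‖ ≤ k * ‖T f - f‖ := by
        simpa only [dist_eq_norm_sub'] using dist_iterate_le_mul_dist_of_lipschitzWith_one hlip f k
    _ ≤ (n + 1) * (ε / (n + 1)) := by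
        gcongr
        exact_mod_cast hk.trans n.le_succ
    _ = ε := by field_simp

theorem exists_norm_sub_le_forall_max_le_norm_iterate (h : HasAlmostFixedVectors T N)
    (hsymm : T.IsSymmetric) (hlip : LipschitzWith 1 T) {x : E} (hx : x ∈ N) {c : ℝ} (hc : 0 < c)
    (n : ℕ) :
    ∃ y ∈ N, ‖y - x‖ ≤ c ∧ ∀ k ≤ n, max ‖T^[k] x‖ (c / 2) ≤ ‖T^[k] y‖ := by
  obtain ⟨f, hfN, hf, hxf, hTf⟩ := h.exists_norm_eq_forall_iterate hlip x hc
    (ε := 3 / 4 * c ^ 2 / (2 * ‖x‖ + c)) (by positivity) (n + n)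
  refine ⟨x + f, N.add_mem hx hfN, by simp [hf], fun k hk => ?_⟩
  have hloss : (2 * ‖x‖ + c) * ‖T^[k] (T^[k] f) - f‖ ≤ 3 / 4 * c ^ 2 := by
    rw [← Function.iterate_add_apply, ← le_div_iff₀' (by positivity)]
    exact hTf (k + k) (by lia)
  have hgain : ‖T^[k] x‖ ^ 2 + (c / 2) ^ 2 ≤ ‖T^[k] (x + f)‖ ^ 2 := by
    have := norm_sq_add_norm_sq_sub_le_norm_map_add_sq (hsymm.pow k) hxf
    simp only [Module.End.pow_apply, hf] at this
    linarith
  exact max_le (le_of_sq_le_sq (by linarith [sq_nonneg (c / 2)]) (norm_nonneg _))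
    (le_of_sq_le_sq (by linarith [sq_nonneg ‖T^[k] x‖]) (norm_nonneg _))

theorem exists_forall_half_le_norm_iterate [CompleteSpace E] (h : HasAlmostFixedVectors T N)
    (hsymm : T.IsSymmetric) (hlip : LipschitzWith 1 T) (hN : IsClosed (N : Set E)) {c : ℕ → ℝ}
    (hc : ∀ j, 0 < c j) (hcsum : Summable c) {n : ℕ → ℕ} (hn : Monotone n) :
    ∃ x ∈ N, ∀ j, ∀ k ≤ n j, c j / 2 ≤ ‖T^[k] x‖ := by
  have hstep (j : ℕ) (x : N) : ∃ y : N, ‖(y : E) - x‖ ≤ c j ∧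
      ∀ k ≤ n j, max ‖T^[k] x‖ (c j / 2) ≤ ‖T^[k] y‖ := by
    obtain ⟨y, hyN, hy⟩ :=
      h.exists_norm_sub_le_forall_max_le_norm_iterate hsymm hlip x.2 (hc j) (n j)
    exact ⟨⟨y, hyN⟩, hy⟩
  choose next hnext_dist hnext_iterate using hstep
  obtain ⟨X, hX⟩ : ∃ X : ℕ → N, ∀ j, X (j + 1) = next j (X j) :=
    ⟨fun j => Nat.rec 0 next j, fun _ => rfl⟩
  have hdist (j : ℕ) : dist (X j : E) (X (j + 1)) ≤ c j := by
    rw [dist_eq_norm_sub', hX]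
    exact hnext_dist j (X j)
  have hiterate (j k : ℕ) (hk : k ≤ n j) :
      max ‖T^[k] (X j)‖ (c j / 2) ≤ ‖T^[k] (X (j + 1))‖ := by
    rw [hX]
    exact hnext_iterate j (X j) k hk
  have hcauchy : CauchySeq fun j => (X j : E) := cauchySeq_of_dist_le_of_summable c hdist hcsum
  obtain ⟨x, hx⟩ := cauchySeq_tendsto_of_complete hcauchy
  refine ⟨x, hN.mem_of_tendsto hx (Eventually.of_forall fun j => (X j).2), fun j k hk => ?_⟩
  have hmono : Monotone fun i => ‖T^[k] (X (j + i))‖ := monotone_nat_of_le_succ fun i =>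
    (le_max_left _ _).trans (hiterate (j + i) k (hk.trans (hn (Nat.le_add_right j i))))
  have hlim : Tendsto (fun i => ‖T^[k] (X (j + i))‖) atTop (𝓝 ‖T^[k] x‖) :=
    (((hlip.continuous.iterate k).tendsto x).comp
      (hx.comp (tendsto_atTop_mono (fun i => Nat.le_add_left i j) tendsto_id))).norm
  calc c j / 2 ≤ ‖T^[k] (X (j + 1))‖ := (le_max_right _ _).trans (hiterate j k hk)
    _ ≤ ‖T^[k] x‖ := hmono.ge_of_tendsto hlim 1

theorem exists_forall_le_norm_iterate [CompleteSpace E] (h : HasAlmostFixedVectors T N)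
    (hsymm : T.IsSymmetric) (hlip : LipschitzWith 1 T) (hN : IsClosed (N : Set E)) {a : ℕ → ℝ}
    (ha : Tendsto a atTop (𝓝 0)) : ∃ x ∈ N, ∀ k, a k ≤ ‖T^[k] x‖ := by
  obtain ⟨B, hB⟩ := ha.bddAbove_range
  let c (j : ℕ) : ℝ := 2 * (|B| + 1) * (1 / 2) ^ j
  have hc (j : ℕ) : 0 < c j := by positivity
  have ha0 (k : ℕ) : a k ≤ c 0 / 2 := by
    have : a k ≤ |B| := (hB ⟨k, rfl⟩).trans (le_abs_self B)
    simp only [c, pow_zero]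
    linarith
  obtain ⟨n, hn, hk⟩ := exists_strictMono_forall_exists_le ha (fun j => half_pos (hc j)) ha0
  obtain ⟨x, hxN, hx⟩ := h.exists_forall_half_le_norm_iterate hsymm hlip hN hc
    (summable_geometric_two.mul_left _) hn.monotone
  refine ⟨x, hxN, fun k => ?_⟩
  obtain ⟨j, hkj, haj⟩ := hk k
  exact haj.trans (hx j k hkj)

end HasAlmostFixedVectors

theorem isClosed_range_of_forall_mem_orthogonal_ker {F : Type*} [NormedAddCommGroup F]
    [NormedSpace 𝕜 F] [CompleteSpace E] {S : E →L[𝕜] F} {δ : ℝ} (hδ : 0 < δ)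
    (hS : ∀ e ∈ S.kerᗮ, ‖e‖ = 1 → δ ≤ ‖S e‖) : IsClosed (S.range : Set F) := by
  let L : S.kerᗮ →L[𝕜] F := S.comp S.kerᗮ.subtypeL
  have hbound (x : S.kerᗮ) : δ * ‖x‖ ≤ ‖L x‖ := by
    rcases eq_or_ne x 0 with rfl | hx
    · simp
    have hnorm : 0 < ‖(x : E)‖ := by simpa using hx
    have := hS (((‖(x : E)‖⁻¹ : ℝ) : 𝕜) • x) (Submodule.smul_mem _ _ x.2)
      (by simp [norm_smul, hnorm.ne'])
    rwa [map_smul, norm_smul, RCLike.norm_of_nonneg (by positivity), inv_mul_eq_div,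
      le_div_iff₀ hnorm] at this
  have hanti : AntilipschitzWith (δ⁻¹).toNNReal L :=
    AddMonoidHomClass.antilipschitz_of_bound L fun x => by
      rw [Real.coe_toNNReal _ (by positivity), inv_mul_eq_div, le_div_iff₀' hδ]
      exact hbound x
  have hrange : (S.range : Set F) = Set.range L := by
    refine Set.Subset.antisymm ?_ ?_
    · rintro _ ⟨x, rfl⟩
      refine ⟨⟨x - S.ker.starProjection x, S.ker.sub_starProjection_mem_orthogonal x⟩, ?_⟩
      have : S (S.ker.starProjection x) = 0 := S.ker.starProjection_apply_mem x
      simp [L, this]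
    · rintro _ ⟨x, rfl⟩
      exact ⟨x, rfl⟩
  rw [hrange]
  exact hanti.isClosed_range L.uniformContinuous

variable [CompleteSpace E] {T : E →L[𝕜] E}

theorem hasAlmostFixedVectors_orthogonal_ker_one_sub
    (hT : ¬ IsClosed ((1 - T).range : Set E)) :
    HasAlmostFixedVectors (T : E →ₗ[𝕜] E) (1 - T).kerᗮ := by
  contrapose! hT
  simp only [HasAlmostFixedVectors, not_forall, not_exists, not_and, not_le] at hT
  obtain ⟨δ, hδ, hmoved⟩ := hT
  refine isClosed_range_of_forall_mem_orthogonal_ker hδ fun e he hnorm => ?_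
  simpa [norm_sub_rev] using (hmoved e he hnorm).le

theorem exists_forall_le_norm_iterate_sub_starProjection_of_not_isClosed_range
    (hself : IsSelfAdjoint T) (hnorm : ‖T‖ ≤ 1) (hT : ¬ IsClosed ((1 - T).range : Set E))
    {a : ℕ → ℝ} (ha : Tendsto a atTop (𝓝 0)) :
    ∃ x, ∀ k, a k ≤ ‖T^[k] x - (1 - T).ker.starProjection x‖ := by
  have hlip : LipschitzWith 1 T := T.lipschitz.weaken hnorm
  obtain ⟨x, hxN, hx⟩ :=
    (hasAlmostFixedVectors_orthogonal_ker_one_sub hT).exists_forall_le_norm_iterate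
      hself.isSymmetric hlip (Submodule.isClosed_orthogonal _) ha
  refine ⟨x, fun k => ?_⟩
  rw [((1 - T).ker.starProjection_apply_eq_zero_iff).2 hxN, sub_zero]
  exact hx k

theorem range_eq_orthogonal_ker_of_isSelfAdjoint (hself : IsSelfAdjoint T)
    (hT : IsClosed (T.range : Set E)) : T.range = T.kerᗮ := by
  rw [T.orthogonal_ker, hself.adjoint_eq, hT.submodule_topologicalClosure_eq]

end SlowOrbits

section SimultaneousProjection

variable {𝕜 H ι : Type*} [RCLike 𝕜] [NormedAddCommGroup H] [InnerProductSpace 𝕜 H]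

/-- The weighted average `T_ω = ∑ᵢ ω i • P_{Mᵢ}` of the orthogonal projections onto the `M i`, as a
series in the space of bounded operators; it is `0` when that series diverges. -/
noncomputable def simultaneousProjection (ω : ι → ℝ) (M : ι → Submodule 𝕜 H)
    [∀ i, (M i).HasOrthogonalProjection] : H →L[𝕜] H :=
  ∑' i, (ω i : 𝕜) • (M i).starProjection

/-- The set `A_ω` of weighted sums of vectors orthogonal to the `M i`. For summable nonnegative `ω`
and complete `H`, the square summability makes the series converge absolutely, by Cauchy-Schwarz, so
that `∑'` takes no junk value here. -/
def weightedOrthogonalSums (ω : ι → ℝ) (M : ι → Submodule 𝕜 H) : Set H :=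
  {y | ∃ x : ι → H, (∀ i, x i ∈ (M i)ᗮ) ∧ (Summable fun i => ω i * ‖x i‖ ^ 2) ∧
    y = ∑' i, (ω i : 𝕜) • x i}

variable {ω : ι → ℝ} {M : ι → Submodule 𝕜 H}

theorem weightedOrthogonalSums_subset_orthogonal_iInf :
    weightedOrthogonalSums ω M ⊆ (⨅ i, M i)ᗮ := by
  rintro _ ⟨x, hx, -, rfl⟩
  exact tsum_mem (Submodule.isClosed_orthogonal _) fun i =>
    Submodule.smul_mem _ _ (Submodule.orthogonal_le (iInf_le M i) (hx i))

variable [∀ i, (M i).HasOrthogonalProjection]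

theorem norm_smul_starProjection_le (hω : ∀ i, 0 ≤ ω i) (i : ι) :
    ‖(ω i : 𝕜) • (M i).starProjection‖ ≤ ω i := by
  rw [norm_smul, RCLike.norm_of_nonneg (hω i)]
  exact mul_le_of_le_one_right (hω i) (M i).starProjection_norm_le

namespace simultaneousProjection

theorem norm_le_one (hω : ∀ i, 0 ≤ ω i) (hsum : HasSum ω 1) :
    ‖simultaneousProjection ω M‖ ≤ 1 :=
  tsum_of_norm_bounded hsum (norm_smul_starProjection_le hω)

variable [CompleteSpace H]

theorem isSelfAdjoint : IsSelfAdjoint (simultaneousProjection ω M) := by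
  have hself (i : ι) : IsSelfAdjoint ((ω i : 𝕜) • (M i).starProjection) :=
    .smul (RCLike.conj_ofReal _) (isSelfAdjoint_starProjection (M i))
  simp only [IsSelfAdjoint, simultaneousProjection, tsum_star, (hself _).star_eq]

theorem hasSum_apply (hω : ∀ i, 0 ≤ ω i) (hsum : Summable ω) (x : H) :
    HasSum (fun i => (ω i : 𝕜) • (M i).starProjection x) (simultaneousProjection ω M x) :=
  (Summable.of_norm_bounded hsum (norm_smul_starProjection_le hω)).hasSum.mapL
    (ContinuousLinearMap.apply 𝕜 H x)

theorem hasSum_sub_apply (hω : ∀ i, 0 ≤ ω i) (hsum : HasSum ω 1) (x : H) :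
    HasSum (fun i => (ω i : 𝕜) • (x - (M i).starProjection x))
      (x - simultaneousProjection ω M x) := by
  have hsum_smul : HasSum (fun i => (ω i : 𝕜) • x) x := by
    simpa using ((RCLike.hasSum_ofReal 𝕜).2 hsum).smul_const x
  simpa only [smul_sub] using hsum_smul.sub (hasSum_apply hω hsum.summable x)

theorem hasSum_mul_norm_sub_sq (hω : ∀ i, 0 ≤ ω i) (hsum : HasSum ω 1) (x : H) :
    HasSum (fun i => ω i * ‖x - (M i).starProjection x‖ ^ 2)
      (RCLike.re ⟪x, x - simultaneousProjection ω M x⟫_𝕜) := by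
  have inner_sub_proj (i : ι) : ⟪x, x - (M i).starProjection x⟫_𝕜 =
      ⟪x - (M i).starProjection x, x - (M i).starProjection x⟫_𝕜 := by
    rw [inner_sub_left, (M i).inner_right_of_mem_orthogonal ((M i).starProjection_apply_mem x)
      ((M i).sub_starProjection_mem_orthogonal x), sub_zero]
  simpa only [innerSL_apply_apply, inner_smul_right, RCLike.re_ofReal_mul, inner_sub_proj,
    inner_self_eq_norm_sq] using
    RCLike.hasSum_re 𝕜 ((hasSum_sub_apply (M := M) hω hsum x).mapL (innerSL 𝕜 x))

theorem ker_one_sub (hω : ∀ i, 0 < ω i) (hsum : HasSum ω 1) :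
    (1 - simultaneousProjection ω M).ker = ⨅ i, M i := by
  ext x
  have hω' (i : ι) : 0 ≤ ω i := (hω i).le
  rw [LinearMap.mem_ker, Submodule.mem_iInf]
  change x - simultaneousProjection ω M x = 0 ↔ _
  constructor
  · intro hx i
    have hzero := hasSum_mul_norm_sub_sq (M := M) hω' hsum x
    rw [hx, inner_zero_right, map_zero,
      hasSum_zero_iff_of_nonneg fun i => mul_nonneg (hω' i) (sq_nonneg _)] at hzero
    have hdist : ‖x - (M i).starProjection x‖ = 0 := by
      simpa [(hω i).ne'] using congrFun hzero i
    exact (M i).starProjection_eq_self_iff.1 (sub_eq_zero.1 (norm_eq_zero.1 hdist)).symm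
  · intro hx
    refine (hasSum_sub_apply hω' hsum x).unique ?_
    simp [Submodule.starProjection_eq_self_iff.2 (hx _)]

theorem range_one_sub_subset_weightedOrthogonalSums (hω : ∀ i, 0 ≤ ω i) (hsum : HasSum ω 1) :
    ((1 - simultaneousProjection ω M).range : Set H) ⊆ weightedOrthogonalSums ω M := by
  rintro _ ⟨x, rfl⟩
  exact ⟨fun i => x - (M i).starProjection x, fun i => (M i).sub_starProjection_mem_orthogonal x,
    (hasSum_mul_norm_sub_sq hω hsum x).summable, (hasSum_sub_apply hω hsum x).tsum_eq.symm⟩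

theorem not_isClosed_range_one_sub (hω : ∀ i, 0 < ω i) (hsum : HasSum ω 1)
    (hnc : ¬ IsClosed (weightedOrthogonalSums ω M)) :
    ¬ IsClosed ((1 - simultaneousProjection ω M).range : Set H) := by
  contrapose! hnc with hclosed
  have hrange : (1 - simultaneousProjection ω M).range = (⨅ i, M i)ᗮ := by
    rw [range_eq_orthogonal_ker_of_isSelfAdjoint ((IsSelfAdjoint.one _).sub isSelfAdjoint) hclosed,
      ker_one_sub hω hsum]
  have : weightedOrthogonalSums ω M = (⨅ i, M i)ᗮ :=
    weightedOrthogonalSums_subset_orthogonal_iInf.antisymm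
      (hrange ▸ range_one_sub_subset_weightedOrthogonalSums (fun i => (hω i).le) hsum)
  exact this ▸ Submodule.isClosed_orthogonal _

end simultaneousProjection

end SimultaneousProjection

theorem stmt_17_general {𝕜 H ι : Type*} [RCLike 𝕜] [NormedAddCommGroup H]
    [InnerProductSpace 𝕜 H] [CompleteSpace H] {ω : ι → ℝ} (hω : ∀ i, 0 < ω i)
    (hωsum : HasSum ω 1) {M : ι → Submodule 𝕜 H} [∀ i, (M i).HasOrthogonalProjection]
    [(⨅ i, M i).HasOrthogonalProjection]
    (hnc : ¬ IsClosed {y : H | ∃ x : ι → H, (∀ i, x i ∈ (M i)ᗮ) ∧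
      (Summable fun i => ω i * ‖x i‖ ^ 2) ∧ y = ∑' i, (ω i : 𝕜) • x i})
    {a : ℕ → ℝ} (ha : Tendsto a atTop (𝓝 0)) :
    ∃ x : H, ∀ k, a k ≤ ‖(fun z : H => ∑' i, (ω i : 𝕜) • (M i).starProjection z)^[k] x -
      (⨅ i, M i).starProjection x‖ := by
  have hω' (i : ι) : 0 ≤ ω i := (hω i).le
  have hT : (fun z : H => ∑' i, (ω i : 𝕜) • (M i).starProjection z) =
      simultaneousProjection ω M :=
    funext fun z => (simultaneousProjection.hasSum_apply hω' hωsum.summable z).tsum_eq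
  rw [hT]
  simpa only [simultaneousProjection.ker_one_sub hω hωsum] using
    exists_forall_le_norm_iterate_sub_starProjection_of_not_isClosed_range
      simultaneousProjection.isSelfAdjoint (simultaneousProjection.norm_le_one hω' hωsum)
      (simultaneousProjection.not_isClosed_range_one_sub hω hωsum hnc) ha

/-- If `A_ω` is not closed in `H`, then the simultaneous projection
method converges arbitrarily slowly: for every nonnegative null sequence `(a_k)` there
is `x ∈ H` with `‖T_ω^k x − P_M x‖ ≥ a_k` for all `k ≥ 1`. -/
theorem stmt_17 {H : Type*} [NormedAddCommGroup H] [InnerProductSpace ℝ H] [CompleteSpace H]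
    {ι : Type*} [Countable ι] [Nonempty ι]
    (ω : ι → ℝ) (hω : ∀ i, 0 < ω i) (hωsum : HasSum ω 1)
    (M : ι → Submodule ℝ H) [∀ i, CompleteSpace (M i)]
    [CompleteSpace ↥(⨅ i, M i : Submodule ℝ H)]
    (hMnt : ∀ i, M i ≠ ⊥)
    (hnc : ¬ IsClosed { y : H | ∃ x : ι → H, (∀ i, x i ∈ (M i)ᗮ) ∧
      (Summable fun i => ω i * ‖x i‖ ^ 2) ∧ y = ∑' i, ω i • x i }) :
    ∀ a : ℕ → ℝ, (∀ k, 0 ≤ a k) → Filter.Tendsto a Filter.atTop (nhds 0) →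
      ∃ x : H, ∀ k : ℕ, 1 ≤ k →
        a k ≤ ‖(fun z : H => ∑' i, ω i • ((Submodule.orthogonalProjectionOnto (M i) z : H)))^[k] x -
          (Submodule.orthogonalProjectionOnto (⨅ i, M i : Submodule ℝ H) x : H)‖ := by
  intro a _ ha
  obtain ⟨x, hx⟩ := stmt_17_general hω hωsum hnc ha
  exact ⟨x, fun k _ => hx k⟩
end
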